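/- arXiv:1205.0309 — 3 statements merged into one kernel-verified Lean document; each statement's English description precedes it below -/
import Mathlib

section
/- Let X, Y ∈ ℝ^{n×d}, let U, V ∈ ℝ^{n×d} have orthonormal columns and Λ ∈ ℝ^{d×d} be diagonal with XYᵀ = UΛVᵀ, and let W ∈ ℝ^{d×d} be orthogonal and Δ ∈ ℝ^{d×d} be diagonal with YᵀY = WΔ²Wᵀ. Then (XWΔ)(XWΔ)ᵀ = (UΛ)(UΛ)ᵀ; consequently, for all indices i, j, the Euclidean distance between the i-th and j-th rows of XWΔ equals the Euclidean distance between the i-th and j-th rows of UΛ. -/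
open Matrix

/-- The Euclidean distance between two vectors in `ℝ^d` (e.g. two rows of a matrix). -/
noncomputable def rowDist {d : ℕ} (a b : Fin d → ℝ) : ℝ :=
  Real.sqrt (∑ k, (a k - b k) ^ 2)

/-- if `XYᵀ = UΛVᵀ` with `U`, `V` having orthonormal columns and `Λ` diagonal, and
`YᵀY = WΔ²Wᵀ` with `W` orthogonal and `Δ` diagonal, then `(XWΔ)(XWΔ)ᵀ = (UΛ)(UΛ)ᵀ`, and
consequently the distances between corresponding pairs of rows of `XWΔ` and `UΛ` agree. -/
theorem stmt7 {n d : ℕ} (X Y U V : Matrix (Fin n) (Fin d) ℝ)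
    (W Δ Λ : Matrix (Fin d) (Fin d) ℝ)
    (hU : Uᵀ * U = 1) (hV : Vᵀ * V = 1) (hΛ : Λ.IsDiag)
    (hSVD : X * Yᵀ = U * Λ * Vᵀ)
    (hW : Wᵀ * W = 1) (hW' : W * Wᵀ = 1) (hΔ : Δ.IsDiag)
    (hYY : Yᵀ * Y = W * (Δ * Δ) * Wᵀ) :
    (X * W * Δ) * (X * W * Δ)ᵀ = (U * Λ) * (U * Λ)ᵀ ∧
      ∀ i j, rowDist ((X * W * Δ) i) ((X * W * Δ) j) = rowDist ((U * Λ) i) ((U * Λ) j) := by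
  have hDt : Δᵀ = Δ := hΔ.isSymm
  have key : (X * W * Δ) * (X * W * Δ)ᵀ = (U * Λ) * (U * Λ)ᵀ := by
    calc (X * W * Δ) * (X * W * Δ)ᵀ = X * (W * (Δ * Δ) * Wᵀ) * Xᵀ := by
          simp only [Matrix.transpose_mul, hDt, Matrix.mul_assoc]
      _ = (X * Yᵀ) * (X * Yᵀ)ᵀ := by
          rw [← hYY]
          simp only [Matrix.transpose_mul, Matrix.transpose_transpose, Matrix.mul_assoc]
      _ = (U * Λ) * (Vᵀ * V) * (U * Λ)ᵀ := by
          rw [hSVD]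
          simp only [Matrix.transpose_mul, Matrix.transpose_transpose, Matrix.mul_assoc]
      _ = (U * Λ) * (U * Λ)ᵀ := by rw [hV, Matrix.mul_one]
  refine ⟨key, fun i j => ?_⟩
  have expand : ∀ A : Matrix (Fin n) (Fin d) ℝ, ∑ k, (A i k - A j k) ^ 2 =
      (A * Aᵀ) i i - 2 * (A * Aᵀ) i j + (A * Aᵀ) j j := by
    intro A
    simp only [Matrix.mul_apply, Matrix.transpose_apply, Finset.mul_sum]
    rw [← Finset.sum_sub_distrib, ← Finset.sum_add_distrib]
    exact Finset.sum_congr rfl fun k _ => by ring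
  unfold rowDist
  rw [expand, expand, key]
end

section
/- Let X, Y ∈ ℝ^{n×d}, let U, V ∈ ℝ^{n×d} have orthonormal columns and Λ ∈ ℝ^{d×d} be diagonal with nonnegative entries such that XYᵀ = UΛVᵀ. Suppose α, γ, β > 0 are such that every eigenvalue of YᵀY is at least αγn, every diagonal entry of Λ is at most n, and let i, j be indices with ‖X_{i,·} − X_{j,·}‖₂ ≥ β. Then ‖U_{i,·} − U_{j,·}‖₂ ≥ β·√(αγ/n). -/
open Matrix

lemma rayleigh_aux {d : ℕ} (A : Matrix (Fin d) (Fin d) ℝ) (hA : A.IsHermitian) (c : ℝ)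
    (h : ∀ (lam : ℝ) (v : Fin d → ℝ), v ≠ 0 → A *ᵥ v = lam • v → c ≤ lam) (x : Fin d → ℝ) :
    c * (x ⬝ᵥ x) ≤ x ⬝ᵥ (A *ᵥ x) := by
  have hB : (A - c • (1 : Matrix (Fin d) (Fin d) ℝ)).IsHermitian := by
    apply hA.sub
    simp [Matrix.IsHermitian]
  have hp : (A - c • (1 : Matrix (Fin d) (Fin d) ℝ)).PosSemidef := by
    rw [hB.posSemidef_iff_eigenvalues_nonneg]
    intro k
    have h1 := hB.mulVec_eigenvectorBasis k
    have h2 := h (hB.eigenvalues k + c) (hB.eigenvectorBasis k).ofLp (by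
      intro h0
      have h3 := hB.eigenvectorBasis.orthonormal.ne_zero k
      apply h3
      ext t
      exact congrFun h0 t) (by
      rw [Matrix.sub_mulVec, Matrix.smul_mulVec, Matrix.one_mulVec] at h1
      rw [add_smul, ← h1]
      simp)
    simp only [Pi.zero_apply]
    linarith
  have h4 := hp.dotProduct_mulVec_nonneg x
  rw [Matrix.sub_mulVec, Matrix.smul_mulVec, Matrix.one_mulVec, dotProduct_sub,
    dotProduct_smul, star_trivial, smul_eq_mul] at h4
  linarith

/-- rows of `X` that are `β`-separated give rows of the left singular vector
matrix `U` of `XYᵀ` that are `β √(αγ/n)`-separated, when every eigenvalue of `YᵀY` is at least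
`αγn` and every diagonal entry of `Λ` is at most `n`. -/
theorem stmt8 {n d : ℕ} (X Y U V : Matrix (Fin n) (Fin d) ℝ)
    (Λ : Matrix (Fin d) (Fin d) ℝ)
    (hU : Uᵀ * U = 1) (hV : Vᵀ * V = 1) (hΛdiag : Λ.IsDiag) (hΛnn : ∀ k, 0 ≤ Λ k k)
    (hSVD : X * Yᵀ = U * Λ * Vᵀ)
    (α γ β : ℝ) (hα : 0 < α) (hγ : 0 < γ) (hβ : 0 < β)
    (hYY : ∀ (lam : ℝ) (v : Fin d → ℝ), v ≠ 0 → (Yᵀ * Y) *ᵥ v = lam • v → α * γ * n ≤ lam)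
    (hΛub : ∀ k, Λ k k ≤ n)
    (i j : Fin n) (hij : β ≤ rowDist (X i) (X j)) :
    β * Real.sqrt (α * γ / n) ≤ rowDist (U i) (U j) := by
  have hn : (0 : ℝ) < n := by exact_mod_cast i.pos
  have hR := rayleigh_aux (Yᵀ * Y) (by simp [Matrix.IsHermitian, Matrix.conjTranspose_mul])
    _ hYY (X i - X j)
  have hrow : ∀ k, X k ᵥ* Yᵀ = (U k ᵥ* Λ) ᵥ* Vᵀ := by
    intro k
    have := congrFun hSVD k
    rw [Matrix.mul_apply_eq_vecMul, Matrix.mul_apply_eq_vecMul, Matrix.mul_apply_eq_vecMul] at this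
    exact this
  have hd : (X i - X j) ᵥ* Yᵀ = ((U i - U j) ᵥ* Λ) ᵥ* Vᵀ := by
    rw [Matrix.sub_vecMul, Matrix.sub_vecMul, Matrix.sub_vecMul, hrow, hrow]
  have hl : (X i - X j) ⬝ᵥ ((Yᵀ * Y) *ᵥ (X i - X j)) =
      ((X i - X j) ᵥ* Yᵀ) ⬝ᵥ ((X i - X j) ᵥ* Yᵀ) := by
    rw [← Matrix.mulVec_mulVec, Matrix.dotProduct_mulVec, Matrix.vecMul_transpose Y]
  have hr : ∀ w : Fin d → ℝ, (w ᵥ* Vᵀ) ⬝ᵥ (w ᵥ* Vᵀ) = w ⬝ᵥ w := by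
    intro w
    rw [← Matrix.dotProduct_mulVec, Matrix.vecMul_transpose, Matrix.mulVec_mulVec, hV,
      Matrix.one_mulVec]
  rw [hl, hd, hr] at hR
  have hw : ∀ k, ((U i - U j) ᵥ* Λ) k = (U i k - U j k) * Λ k k := by
    intro k
    rw [Matrix.vecMul, dotProduct, Finset.sum_eq_single k]
    · rfl
    · intro b _ hb
      rw [hΛdiag hb, mul_zero]
    · simp
  have hub : ((U i - U j) ᵥ* Λ) ⬝ᵥ ((U i - U j) ᵥ* Λ) ≤ n ^ 2 * ∑ k, (U i k - U j k) ^ 2 := by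
    rw [dotProduct, Finset.mul_sum]
    apply Finset.sum_le_sum
    intro k _
    rw [hw]
    have h1 : Λ k k ^ 2 ≤ (n : ℝ) ^ 2 := pow_le_pow_left₀ (hΛnn k) (hΛub k) 2
    nlinarith [mul_le_mul_of_nonneg_right h1 (sq_nonneg (U i k - U j k))]
  have hx : (X i - X j) ⬝ᵥ (X i - X j) = ∑ k, (X i k - X j k) ^ 2 := by
    simp [dotProduct, sq]
  have hb : β ^ 2 ≤ ∑ k, (X i k - X j k) ^ 2 := by
    rw [rowDist] at hij
    exact (Real.le_sqrt' hβ).1 hij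
  rw [hx] at hR
  rw [rowDist]
  apply Real.le_sqrt_of_sq_le
  rw [mul_pow, Real.sq_sqrt (by positivity), ← mul_div_assoc, div_le_iff₀ hn]
  have h5 : α * γ * n * β ^ 2 ≤ n ^ 2 * ∑ k, (U i k - U j k) ^ 2 :=
    (mul_le_mul_of_nonneg_left hb (by positivity)).trans (hR.trans hub)
  refine le_of_mul_le_mul_left ?_ hn
  linarith
end

section
/- Let X, Y ∈ ℝ^{n×d}, let U, V ∈ ℝ^{n×d} have orthonormal columns, and let Λ ∈ ℝ^{d×d} be an invertible diagonal matrix such that XYᵀ = UΛVᵀ. Then for all indices i, j: if X_{i,·} = X_{j,·} then U_{i,·} = U_{j,·}, and if Y_{i,·} = Y_{j,·} then V_{i,·} = V_{j,·}. -/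
open Matrix

/-- if `XYᵀ = UΛVᵀ` with `U`, `V` having orthonormal columns and `Λ` an invertible
diagonal matrix, then equal rows of `X` give equal rows of `U`, and equal rows of `Y` give equal
rows of `V`. -/
theorem stmt18 {n d : ℕ} (X Y U V : Matrix (Fin n) (Fin d) ℝ)
    (Λ : Matrix (Fin d) (Fin d) ℝ)
    (hU : Uᵀ * U = 1) (hV : Vᵀ * V = 1)
    (hΛdiag : Λ.IsDiag) (hΛinv : IsUnit Λ.det)
    (hSVD : X * Yᵀ = U * Λ * Vᵀ) (i j : Fin n) :
    (X i = X j → U i = U j) ∧ (Y i = Y j → V i = V j) := by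
  have key : ∀ (A B : Matrix (Fin n) (Fin d) ℝ) (C : Matrix (Fin d) (Fin d) ℝ),
      A * C = B → A i = A j → B i = B j := by
    intro A B C h hij
    subst h
    funext k
    simp only [Matrix.mul_apply, hij]
  have hSVD' : Y * Xᵀ = V * Λᵀ * Uᵀ := by
    have h := congrArg Matrix.transpose hSVD
    simpa [Matrix.transpose_mul, Matrix.mul_assoc] using h
  have hΛinv' : IsUnit Λᵀ.det := by rwa [Matrix.det_transpose]
  constructor
  · refine key X U (Yᵀ * (V * Λ⁻¹)) ?_
    rw [← Matrix.mul_assoc, hSVD, Matrix.mul_assoc, ← Matrix.mul_assoc Vᵀ, hV, Matrix.one_mul,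
      Matrix.mul_assoc, Matrix.mul_nonsing_inv _ hΛinv, Matrix.mul_one]
  · refine key Y V (Xᵀ * (U * Λᵀ⁻¹)) ?_
    rw [← Matrix.mul_assoc, hSVD', Matrix.mul_assoc, ← Matrix.mul_assoc Uᵀ, hU, Matrix.one_mul,
      Matrix.mul_assoc, Matrix.mul_nonsing_inv _ hΛinv', Matrix.mul_one]
end
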